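/- Under the feature and core-state assumptions, for every action distribution π ∈ Δ_𝒜, define q†(π) := Σ_{a∈𝒜} π(a)·r_{s₀a} + V_LRALP(γμ_π) with μ_πᵀ = Σ_{a∈𝒜} π(a)·P_{s₀a}, and q*(s₀,π) := Σ_{a∈𝒜} π(a)·q*(s₀,a). Then |q†(π) − q*(s₀,π)| ≤ 10γ·ε_approx/(1−γ). -/

import Mathlib

open scoped BigOperators

namespace MDPPlan

variable {S A : Type} [Fintype S] [Fintype A] [DecidableEq S] {d m : ℕ}

/-- `φ_sᵀθ`: dot product of the feature vector of state `s` with weights `θ`. -/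
noncomputable def phiDot (Φ : S → Fin d → ℝ) (θ : Fin d → ℝ) (s : S) : ℝ :=
  ∑ j, Φ s j * θ j

/-- The sequence `𝒮₊ = (s₀, s₁, …, s_m)`: `none` is the planning state `s₀`,
`some i` is the `i`-th core state. -/
def splus (s₀ : S) (c : Fin m → S) : Option (Fin m) → S := fun o => o.elim s₀ c

/-- State-transition matrix `P_π` of a stationary policy `π`. -/
noncomputable def Ppi (P : S → A → S → ℝ) (π : S → A → ℝ) : Matrix S S ℝ :=
  Matrix.of fun s s' => ∑ a, π s a * P s a s'

/-- Expected reward `r_π` of a stationary policy `π`. -/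
noncomputable def rpi (r : S → A → ℝ) (π : S → A → ℝ) : S → ℝ :=
  fun s => ∑ a, π s a * r s a

/-- `π` is a stationary policy: each `π(·|s)` is a probability distribution over actions. -/
def IsPolicy (π : S → A → ℝ) : Prop := (∀ s a, 0 ≤ π s a) ∧ ∀ s, ∑ a, π s a = 1

/-- Value function `v_π = Σ_{t≥0} (γ P_π)^t r_π`. -/
noncomputable def vpi (γ : ℝ) (P : S → A → S → ℝ) (r : S → A → ℝ) (π : S → A → ℝ) :
    S → ℝ :=
  ∑' t : ℕ, ((γ • Ppi P π) ^ t).mulVec (rpi r π)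

/-- Optimal value function `v*(s) = sup_π v_π(s)`. -/
noncomputable def vstar (γ : ℝ) (P : S → A → S → ℝ) (r : S → A → ℝ) : S → ℝ :=
  fun s => ⨆ π : {π : S → A → ℝ // IsPolicy π}, vpi γ P r π.1 s

/-- Optimal action-value function `q*(s,a) = r_{sa} + γ P_{sa} v*`. -/
noncomputable def qstar (γ : ℝ) (P : S → A → S → ℝ) (r : S → A → ℝ) (s : S) (a : A) : ℝ :=
  r s a + γ * ∑ s', P s a s' * vstar γ P r s'

/-- `ε_approx = inf_θ max_s |v*(s) − φ_sᵀθ|`. -/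
noncomputable def epsApprox (Φ : S → Fin d → ℝ) (v : S → ℝ) : ℝ :=
  ⨅ θ : Fin d → ℝ, ⨆ s : S, |v s - phiDot Φ θ s|

/-- Membership in `Λ`: nonnegative and the `s₀`-block sums to one. -/
def InLambda (lam : Option (Fin m) × A → ℝ) : Prop :=
  (∀ p, 0 ≤ lam p) ∧ ∑ a, lam (none, a) = 1

/-- The CoreLP equality constraint `φ_{s₀}ᵀ + λᵀW(γP − E)Φ = 0ᵀ`. -/
def CoreLPConstraint (γ : ℝ) (P : S → A → S → ℝ) (Φ : S → Fin d → ℝ) (s₀ : S)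
    (c : Fin m → S) (lam : Option (Fin m) × A → ℝ) : Prop :=
  ∀ j : Fin d, Φ s₀ j + ∑ p : Option (Fin m) × A,
    lam p * (γ * (∑ s', P (splus s₀ c p.1) p.2 s' * Φ s' j) - Φ (splus s₀ c p.1) j) = 0

/-- The CoreLP objective `λᵀWr`. -/
noncomputable def CoreLPObj (r : S → A → ℝ) (s₀ : S) (c : Fin m → S)
    (lam : Option (Fin m) × A → ℝ) : ℝ :=
  ∑ p : Option (Fin m) × A, lam p * r (splus s₀ c p.1) p.2

/-- The optimal value `V†` of CoreLP. -/
noncomputable def Vdagger (γ : ℝ) (P : S → A → S → ℝ) (r : S → A → ℝ)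
    (Φ : S → Fin d → ℝ) (s₀ : S) (c : Fin m → S) : ℝ :=
  sSup {x : ℝ | ∃ lam : Option (Fin m) × A → ℝ,
    InLambda lam ∧ CoreLPConstraint γ P Φ s₀ c lam ∧ x = CoreLPObj r s₀ c lam}

/-- Feasibility for LRALP: `W*r + W*(γP − E)Φθ ≤ 0`. -/
def LRALPFeasible (γ : ℝ) (P : S → A → S → ℝ) (r : S → A → ℝ) (Φ : S → Fin d → ℝ)
    (c : Fin m → S) (θ : Fin d → ℝ) : Prop :=
  ∀ (i : Fin m) (a : A),
    r (c i) a + (γ * (∑ s', P (c i) a s' * phiDot Φ θ s') - phiDot Φ θ (c i)) ≤ 0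

/-- `V_LRALP(μ) = min { μᵀΦθ : θ feasible for LRALP }`. -/
noncomputable def VLRALP (γ : ℝ) (P : S → A → S → ℝ) (r : S → A → ℝ) (Φ : S → Fin d → ℝ)
    (c : Fin m → S) (μ : S → ℝ) : ℝ :=
  sInf {x : ℝ | ∃ θ : Fin d → ℝ, LRALPFeasible γ P r Φ c θ ∧ x = ∑ s, μ s * phiDot Φ θ s}

/-- The Saddle CoreLP objective `f(λ,θ) = λᵀWr + φ_{s₀}ᵀθ + λᵀW(γP − E)Φθ`. -/
noncomputable def fObj (γ : ℝ) (P : S → A → S → ℝ) (r : S → A → ℝ) (Φ : S → Fin d → ℝ)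
    (s₀ : S) (c : Fin m → S) (lam : Option (Fin m) × A → ℝ) (θ : Fin d → ℝ) : ℝ :=
  CoreLPObj r s₀ c lam + phiDot Φ θ s₀ +
    ∑ p : Option (Fin m) × A,
      lam p * (γ * (∑ s', P (splus s₀ c p.1) p.2 s' * phiDot Φ θ s') -
        phiDot Φ θ (splus s₀ c p.1))

/-- The Saddle LRALP objective `g_μ(λ*,θ) = λ*ᵀW*r + μᵀΦθ + λ*ᵀW*(γP − E)Φθ`. -/
noncomputable def gObj (γ : ℝ) (P : S → A → S → ℝ) (r : S → A → ℝ) (Φ : S → Fin d → ℝ)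
    (c : Fin m → S) (μ : S → ℝ) (lamS : Fin m × A → ℝ) (θ : Fin d → ℝ) : ℝ :=
  (∑ p : Fin m × A, lamS p * r (c p.1) p.2) + (∑ s, μ s * phiDot Φ θ s) +
    ∑ p : Fin m × A,
      lamS p * (γ * (∑ s', P (c p.1) p.2 s' * phiDot Φ θ s') - phiDot Φ θ (c p.1))

/-- The `𝓑`-bounded duality gap `δ_𝓑(λ̂,θ̂) = max_{λ∈Λ_γ} f(λ,θ̂) − inf_{θ∈𝓑} f(λ̂,θ)`. -/
noncomputable def dualityGap (γ : ℝ) (P : S → A → S → ℝ) (r : S → A → ℝ)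
    (Φ : S → Fin d → ℝ) (s₀ : S) (c : Fin m → S) (Bset : Set (Fin d → ℝ))
    (lamHat : Option (Fin m) × A → ℝ) (θHat : Fin d → ℝ) : ℝ :=
  sSup {x : ℝ | ∃ lam : Option (Fin m) × A → ℝ,
      InLambda lam ∧ (∑ p, |lam p|) = 1 / (1 - γ) ∧ x = fObj γ P r Φ s₀ c lam θHat} -
    sInf {x : ℝ | ∃ θ ∈ Bset, x = fObj γ P r Φ s₀ c lamHat θ}


lemma aux_nonpos {S : Type} [Fintype S] [Nonempty S] (γ : ℝ) (hγ0 : 0 ≤ γ) (hγ1 : γ < 1)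
    (Q : S → S → ℝ) (hQ0 : ∀ s s', 0 ≤ Q s s') (hQ1 : ∀ s, ∑ s', Q s s' = 1)
    (x : S → ℝ) (hx : ∀ s, x s ≤ γ * ∑ s', Q s s' * x s') : ∀ s, x s ≤ 0 := by
  obtain ⟨t, ht⟩ := Finite.exists_max x
  have h1 : ∑ s', Q t s' * x s' ≤ x t := by
    calc ∑ s', Q t s' * x s' ≤ ∑ s', Q t s' * x t :=
          Finset.sum_le_sum fun s' _ => mul_le_mul_of_nonneg_left (ht s') (hQ0 t s')
      _ = x t := by rw [← Finset.sum_mul, hQ1, one_mul]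
  have h2 := hx t
  have h3 := mul_le_mul_of_nonneg_left h1 hγ0
  have h4 : x t ≤ 0 := by nlinarith
  intro s
  exact (ht s).trans h4

lemma vpi_eq {S A : Type} [Fintype S] [Fintype A] [DecidableEq S]
    (γ : ℝ) (hγ0 : 0 ≤ γ) (hγ1 : γ < 1)
    (P : S → A → S → ℝ) (r : S → A → ℝ) (π : S → A → ℝ)
    (hQ0 : ∀ s s', 0 ≤ Ppi P π s s') (hQ1 : ∀ s, ∑ s', Ppi P π s s' = 1) (s : S) :
    vpi γ P r π s = rpi r π s + γ * ∑ s', Ppi P π s s' * vpi γ P r π s' := by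
  set M : Matrix S S ℝ := γ • Ppi P π with hM
  set ρ := rpi r π with hρ
  have hb : ∀ t : ℕ, ‖(M ^ t).mulVec ρ‖ ≤ γ ^ t * ‖ρ‖ := by
    intro t
    induction t with
    | zero => simp
    | succ t ih =>
      rw [pow_succ', ← Matrix.mulVec_mulVec]
      refine (pi_norm_le_iff_of_nonneg (by positivity)).2 fun s => ?_
      set y := (M ^ t).mulVec ρ
      have e : (M.mulVec y) s = γ * ∑ s', Ppi P π s s' * y s' := by
        simp [Matrix.mulVec, dotProduct, hM, Finset.mul_sum, mul_assoc]
      rw [e, Real.norm_eq_abs, abs_mul, abs_of_nonneg hγ0]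
      have : |∑ s', Ppi P π s s' * y s'| ≤ ‖y‖ := by
        calc |∑ s', Ppi P π s s' * y s'| ≤ ∑ s', |Ppi P π s s' * y s'| :=
              Finset.abs_sum_le_sum_abs _ _
          _ ≤ ∑ s', Ppi P π s s' * ‖y‖ := by
              refine Finset.sum_le_sum fun s' _ => ?_
              rw [abs_mul, abs_of_nonneg (hQ0 s s')]
              exact mul_le_mul_of_nonneg_left (norm_le_pi_norm y s') (hQ0 s s')
          _ = ‖y‖ := by rw [← Finset.sum_mul, hQ1, one_mul]
      calc γ * |∑ s', Ppi P π s s' * y s'| ≤ γ * (γ ^ t * ‖ρ‖) :=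
            mul_le_mul_of_nonneg_left (this.trans ih) hγ0
        _ = γ ^ (t+1) * ‖ρ‖ := by ring
  have hs : Summable fun t : ℕ => (M ^ t).mulVec ρ :=
    Summable.of_norm_bounded ((summable_geometric_of_lt_one hγ0 hγ1).mul_right _) hb
  have hv : vpi γ P r π = ρ + M.mulVec (vpi γ P r π) := by
    have h1 : vpi γ P r π = ∑' t : ℕ, (M ^ t).mulVec ρ := rfl
    have h2 := (Matrix.mulVecLin M).toContinuousLinearMap.map_tsum hs
    simp only [LinearMap.coe_toContinuousLinearMap', Matrix.mulVecLin_apply] at h2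
    rw [h1, h2]
    conv_lhs => rw [hs.tsum_eq_zero_add]
    simp [pow_succ', Matrix.mulVec_mulVec]
  have := congrFun hv s
  rw [this]
  simp only [Pi.add_apply]
  congr 1
  simp [Matrix.mulVec, dotProduct, hM, Finset.mul_sum, mul_assoc]

lemma exists_fix {S A : Type} [Fintype S] [Fintype A] [Nonempty A]
    (γ : ℝ) (hγ0 : 0 ≤ γ) (hγ1 : γ < 1)
    (P : S → A → S → ℝ) (hP0 : ∀ s a s', 0 ≤ P s a s')
    (hP1 : ∀ s a, ∑ s', P s a s' = 1) (r : S → A → ℝ) :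
    ∃ v : S → ℝ, (∀ s a, r s a + γ * ∑ s', P s a s' * v s' ≤ v s) ∧
      ∀ s, ∃ a, v s = r s a + γ * ∑ s', P s a s' * v s' := by
  let F : (S → ℝ) → S → A → ℝ := fun u s a => r s a + γ * ∑ s', P s a s' * u s'
  let T : (S → ℝ) → S → ℝ := fun u s => Finset.univ.sup' Finset.univ_nonempty (F u s)
  have hF : ∀ u w s a, F u s a ≤ F w s a + γ * dist u w := by
    intro u w s a
    have : ∑ s', P s a s' * u s' ≤ ∑ s', P s a s' * w s' + dist u w := by
      calc ∑ s', P s a s' * u s' ≤ ∑ s', (P s a s' * w s' + P s a s' * dist u w) := by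
            refine Finset.sum_le_sum fun s' _ => ?_
            rw [← mul_add]
            refine mul_le_mul_of_nonneg_left ?_ (hP0 s a s')
            have h := dist_le_pi_dist u w s'
            rw [Real.dist_eq] at h
            linarith [le_abs_self (u s' - w s')]
        _ = _ := by rw [Finset.sum_add_distrib, ← Finset.sum_mul, hP1, one_mul]
    have := mul_le_mul_of_nonneg_left this hγ0
    simp only [F]
    linarith
  have hT : ∀ u w s, T u s ≤ T w s + γ * dist u w := by
    intro u w s
    refine Finset.sup'_le _ _ fun a ha => (hF u w s a).trans ?_
    gcongr
    exact Finset.le_sup' (F w s) ha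
  have hC : ContractingWith ⟨γ, hγ0⟩ T := by
    refine ⟨by exact_mod_cast hγ1, LipschitzWith.of_dist_le_mul fun u w => ?_⟩
    refine (dist_pi_le_iff (by positivity)).2 fun s => ?_
    rw [Real.dist_eq, abs_le]
    have h1 := hT u w s
    have h2 := hT w u s
    rw [dist_comm] at h2
    constructor
    · change -(γ * dist u w) ≤ _
      linarith
    · change _ ≤ γ * dist u w
      linarith
  have hfix : T (hC.fixedPoint T) = hC.fixedPoint T := hC.fixedPoint_isFixedPt
  refine ⟨hC.fixedPoint T, fun s a => ?_, fun s => ?_⟩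
  · conv_rhs => rw [← hfix]
    exact Finset.le_sup' (F _ s) (Finset.mem_univ a)
  · obtain ⟨a, -, ha⟩ := Finset.exists_mem_eq_sup' Finset.univ_nonempty (F (hC.fixedPoint T) s)
    exact ⟨a, (congrFun hfix s).symm.trans ha⟩

lemma vstar_bellman {S A : Type} [Fintype S] [Fintype A] [DecidableEq S] [Nonempty S] [Nonempty A]
    (γ : ℝ) (hγ0 : 0 ≤ γ) (hγ1 : γ < 1)
    (P : S → A → S → ℝ) (hP0 : ∀ s a s', 0 ≤ P s a s')
    (hP1 : ∀ s a, ∑ s', P s a s' = 1) (r : S → A → ℝ) :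
    (∀ s a, r s a + γ * ∑ s', P s a s' * vstar γ P r s' ≤ vstar γ P r s) ∧
      ∀ s, ∃ a, vstar γ P r s = r s a + γ * ∑ s', P s a s' * vstar γ P r s' := by
  classical
  obtain ⟨v, hv1, hv2⟩ := exists_fix γ hγ0 hγ1 P hP0 hP1 r
  have hQ0 : ∀ π : S → A → ℝ, IsPolicy π → ∀ s s', 0 ≤ Ppi P π s s' := fun π hπ s s' =>
    Finset.sum_nonneg fun a _ => mul_nonneg (hπ.1 s a) (hP0 s a s')
  have hQs : ∀ (π : S → A → ℝ) (x : S → ℝ) s,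
      ∑ s', Ppi P π s s' * x s' = ∑ a, π s a * ∑ s', P s a s' * x s' := by
    intro π x s
    simp only [Ppi, Matrix.of_apply, Finset.sum_mul, Finset.mul_sum]
    rw [Finset.sum_comm]
    simp only [mul_assoc]
  have hQ1 : ∀ π : S → A → ℝ, IsPolicy π → ∀ s, ∑ s', Ppi P π s s' = 1 := by
    intro π hπ s
    have := hQs π (fun _ => 1) s
    simpa [hP1, hπ.2] using this
  have hle : ∀ π : S → A → ℝ, IsPolicy π → ∀ s, vpi γ P r π s ≤ v s := by
    intro π hπ s
    have := aux_nonpos γ hγ0 hγ1 (Ppi P π) (hQ0 π hπ) (hQ1 π hπ) (fun s => vpi γ P r π s - v s)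
      (fun s => by
        have h1 := vpi_eq γ hγ0 hγ1 P r π (hQ0 π hπ) (hQ1 π hπ) s
        have h2 : rpi r π s + γ * ∑ s', Ppi P π s s' * v s' ≤ v s := by
          rw [hQs, rpi, Finset.mul_sum, ← Finset.sum_add_distrib]
          calc _ ≤ ∑ a, π s a * v s := by
                refine Finset.sum_le_sum fun a _ => ?_
                have := mul_le_mul_of_nonneg_left (hv1 s a) (hπ.1 s a)
                linarith
            _ = v s := by rw [← Finset.sum_mul, hπ.2, one_mul]
        simp only [mul_sub, Finset.sum_sub_distrib]
        linarith) s
    simpa using this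
  choose g hg using hv2
  let πg : S → A → ℝ := fun s a => if a = g s then 1 else 0
  have hπg : IsPolicy πg := by
    constructor
    · intro s a
      simp only [πg]; split_ifs <;> norm_num
    · intro s; simp [πg]
  have hge : ∀ s, v s ≤ vpi γ P r πg s := by
    intro s
    have := aux_nonpos γ hγ0 hγ1 (Ppi P πg) (hQ0 _ hπg) (hQ1 _ hπg)
      (fun s => v s - vpi γ P r πg s)
      (fun s => by
        have h1 := vpi_eq γ hγ0 hγ1 P r πg (hQ0 _ hπg) (hQ1 _ hπg) s
        have h2 : rpi r πg s + γ * ∑ s', Ppi P πg s s' * v s' = v s := by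
          rw [hQs, rpi]
          simp only [πg, ite_mul, one_mul, zero_mul, Finset.sum_ite_eq', Finset.mem_univ, if_true]
          exact (hg s).symm
        simp only [mul_sub, Finset.sum_sub_distrib]
        linarith) s
    simpa using this
  have hvs : vstar γ P r = v := by
    funext s
    haveI : Nonempty {π : S → A → ℝ // IsPolicy π} := ⟨⟨πg, hπg⟩⟩
    refine le_antisymm (ciSup_le fun π => hle π.1 π.2 s) ?_
    refine (hge s).trans ?_
    exact le_ciSup (f := fun π : {π : S → A → ℝ // IsPolicy π} => vpi γ P r π.1 s)
      ⟨v s, by rintro _ ⟨π, rfl⟩; exact hle π.1 π.2 s⟩ ⟨πg, hπg⟩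
  rw [hvs]
  exact ⟨hv1, fun s => ⟨g s, hg s⟩⟩

lemma avg_le {S : Type} [Fintype S] (p : S → ℝ) (hp0 : ∀ s, 0 ≤ p s) (hp1 : ∑ s, p s = 1)
    (x y : S → ℝ) (e : ℝ) (h : ∀ s, x s ≤ y s + e) :
    ∑ s, p s * x s ≤ ∑ s, p s * y s + e := by
  calc ∑ s, p s * x s ≤ ∑ s, (p s * y s + p s * e) := by
        refine Finset.sum_le_sum fun s _ => ?_
        rw [← mul_add]
        exact mul_le_mul_of_nonneg_left (h s) (hp0 s)
    _ = _ := by rw [Finset.sum_add_distrib, ← Finset.sum_mul, hp1, one_mul]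

/-- `|q†(π) − q*(s₀,π)| ≤ 10γ ε_approx/(1−γ)` for all `π ∈ Δ_𝒜`. -/
theorem qdagger_close_to_qstar
    {S A : Type} [Fintype S] [Fintype A] [DecidableEq S] [Nonempty S] [Nonempty A]
    {d m : ℕ} (γ : ℝ) (hγ0 : 0 ≤ γ) (hγ1 : γ < 1)
    (P : S → A → S → ℝ) (hP0 : ∀ s a s', 0 ≤ P s a s')
    (hP1 : ∀ s a, ∑ s', P s a s' = 1)
    (r : S → A → ℝ)
    (Φ : S → Fin d → ℝ) (hfeat : ∃ η : Fin d → ℝ, ∀ s, phiDot Φ η s = 1)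
    (c : Fin m → S) (hc : Function.Injective c)
    (hcore : ∃ Z : S → Fin m → ℝ, (∀ s i, 0 ≤ Z s i) ∧
      ∀ s j, Φ s j = ∑ i, Z s i * Φ (c i) j)
    (s₀ : S)
    (π : A → ℝ) (hπ0 : ∀ a, 0 ≤ π a) (hπ1 : ∑ a, π a = 1) :
    |((∑ a, π a * r s₀ a) +
        VLRALP γ P r Φ c (fun s => γ * ∑ a, π a * P s₀ a s)) -
      ∑ a, π a * qstar γ P r s₀ a| ≤
      10 * γ * epsApprox Φ (vstar γ P r) / (1 - γ) := by
  obtain ⟨hb1, hb2⟩ := vstar_bellman γ hγ0 hγ1 P hP0 hP1 r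
  set v := vstar γ P r with hv
  obtain ⟨η, hη⟩ := hfeat
  obtain ⟨Z, hZ0, hZ⟩ := hcore
  have hg : 0 < 1 - γ := by linarith
  have hlin : ∀ (θ θ' : Fin d → ℝ) (k : ℝ) s,
      phiDot Φ (fun j => θ j + k * θ' j) s = phiDot Φ θ s + k * phiDot Φ θ' s := by
    intro θ θ' k s
    simp only [phiDot, mul_add, Finset.sum_add_distrib, Finset.mul_sum]
    congr 1
    exact Finset.sum_congr rfl fun j _ => by ring
  have hZd : ∀ θ s, phiDot Φ θ s = ∑ i, Z s i * phiDot Φ θ (c i) := by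
    intro θ s
    simp only [phiDot, Finset.mul_sum]
    rw [Finset.sum_comm]
    refine Finset.sum_congr rfl fun j _ => ?_
    rw [hZ s j, Finset.sum_mul]
    exact Finset.sum_congr rfl fun i _ => by ring
  have hZ1 : ∀ s, ∑ i, Z s i = 1 := by
    intro s
    have := hZd η s
    simpa [hη] using this.symm
  let μ : S → ℝ := fun s => ∑ a, π a * P s₀ a s
  have hμ0 : ∀ s, 0 ≤ μ s := fun s => Finset.sum_nonneg fun a _ => mul_nonneg (hπ0 a) (hP0 _ _ _)
  have hμs : ∀ x : S → ℝ, ∑ s, μ s * x s = ∑ a, π a * ∑ s', P s₀ a s' * x s' := by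
    intro x
    simp only [μ, Finset.sum_mul, Finset.mul_sum]
    rw [Finset.sum_comm]
    simp only [mul_assoc]
  have hμ1 : ∑ s, μ s = 1 := by
    have := hμs (fun _ => 1)
    simpa [hP1, hπ1] using this
  have hq : ∑ a, π a * qstar γ P r s₀ a = ∑ a, π a * r s₀ a + γ * ∑ s, μ s * v s := by
    rw [hμs, Finset.mul_sum, ← Finset.sum_add_distrib]
    refine Finset.sum_congr rfl fun a _ => ?_
    simp only [qstar, ← hv]; ring
  have hobj : ∀ θ : Fin d → ℝ, ∑ s, (γ * ∑ a, π a * P s₀ a s) * phiDot Φ θ s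
      = γ * ∑ s, μ s * phiDot Φ θ s := by
    intro θ
    rw [Finset.mul_sum]
    exact Finset.sum_congr rfl fun s _ => by simp only [μ]; ring
  have heps : 0 ≤ epsApprox Φ v :=
    Real.iInf_nonneg fun θ => Real.iSup_nonneg fun s => abs_nonneg _
  set V := VLRALP γ P r Φ c (fun s => γ * ∑ a, π a * P s₀ a s) with hV
  have key : ∀ θ : Fin d → ℝ, |V - γ * ∑ s, μ s * v s| ≤
      2 * γ / (1 - γ) * ⨆ s : S, |v s - phiDot Φ θ s| := by
    intro θ
    set e := ⨆ s : S, |v s - phiDot Φ θ s| with he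
    have hes : ∀ s, |v s - phiDot Φ θ s| ≤ e := fun s =>
      le_ciSup (f := fun s => |v s - phiDot Φ θ s|) (Set.finite_range _).bddAbove s
    have hes1 : ∀ s, v s ≤ phiDot Φ θ s + e := fun s => by linarith [(abs_le.1 (hes s)).2]
    have hes2 : ∀ s, phiDot Φ θ s ≤ v s + e := fun s => by linarith [(abs_le.1 (hes s)).1]
    have hk : (1 - γ) * (2 * e / (1 - γ)) = 2 * e := by field_simp
    set K := 2 * e / (1 - γ) with hK
    have hlow : ∀ θ', LRALPFeasible γ P r Φ c θ' → ∀ s, v s ≤ phiDot Φ θ' s + K := by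
      intro θ' hf
      obtain ⟨t, ht⟩ := Finite.exists_max (fun s => phiDot Φ θ s - phiDot Φ θ' s)
      set D := phiDot Φ θ t - phiDot Φ θ' t with hD
      have hvu : ∀ s, v s ≤ phiDot Φ θ' s + (D + e) := fun s => by
        have : phiDot Φ θ s - phiDot Φ θ' s ≤ D := ht s
        have := hes1 s
        linarith
      have hcc : ∀ i, phiDot Φ θ (c i) ≤ phiDot Φ θ' (c i) + (e + γ * (D + e)) := by
        intro i
        obtain ⟨a, ha⟩ := hb2 (c i)
        have h1 := hf i a
        have h2 := mul_le_mul_of_nonneg_left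
          (avg_le (P (c i) a) (hP0 _ _) (hP1 _ _) v (phiDot Φ θ') (D + e) hvu) hγ0
        have h3 := hes2 (c i)
        linarith
      have h4 := avg_le (Z t) (hZ0 t) (hZ1 t) (fun i => phiDot Φ θ (c i))
        (fun i => phiDot Φ θ' (c i)) _ hcc
      rw [← hZd, ← hZd] at h4
      have h5 : (1 - γ) * (D + e) ≤ (1 - γ) * K := by
        rw [hk]; linarith
      have h6 := le_of_mul_le_mul_left h5 hg
      intro s
      linarith [hvu s]
    have hupf : LRALPFeasible γ P r Φ c (fun j => θ j + (K - e) * η j) := by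
      intro i a
      have h1 := hb1 (c i) a
      have h2 := mul_le_mul_of_nonneg_left
          (avg_le (P (c i) a) (hP0 _ _) (hP1 _ _)
            (phiDot Φ (fun j => θ j + (K - e) * η j)) v K
            (fun s => by rw [hlin, hη]; linarith [hes2 s])) hγ0
      have h3 := hes1 (c i)
      have h4 : phiDot Φ (fun j => θ j + (K - e) * η j) (c i) = phiDot Φ θ (c i) + (K - e) := by
        rw [hlin, hη, mul_one]
      rw [h4]
      linarith
    have hlow' : ∀ x ∈ {x : ℝ | ∃ θ : Fin d → ℝ, LRALPFeasible γ P r Φ c θ ∧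
        x = ∑ s, (γ * ∑ a, π a * P s₀ a s) * phiDot Φ θ s},
        γ * ∑ s, μ s * v s - γ * K ≤ x := by
      rintro x ⟨θ', hf, rfl⟩
      rw [hobj]
      have := mul_le_mul_of_nonneg_left (avg_le μ hμ0 hμ1 v (phiDot Φ θ') K (hlow θ' hf)) hγ0
      linarith
    have hL : γ * ∑ s, μ s * v s - γ * K ≤ V := le_csInf ⟨_, _, hupf, rfl⟩ hlow'
    have hU : V ≤ γ * ∑ s, μ s * v s + γ * K := by
      refine (csInf_le ⟨_, hlow'⟩ ⟨_, hupf, rfl⟩).trans ?_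
      rw [hobj]
      have := mul_le_mul_of_nonneg_left
          (avg_le μ hμ0 hμ1
            (phiDot Φ (fun j => θ j + (K - e) * η j)) v K
            (fun s => by rw [hlin, hη]; linarith [hes2 s])) hγ0
      linarith
    have : 2 * γ / (1 - γ) * e = γ * K := by rw [hK]; ring
    rw [this, abs_le]
    constructor <;> linarith
  have hc0 : 0 ≤ 2 * γ / (1 - γ) := by positivity
  have hfin : |V - γ * ∑ s, μ s * v s| ≤ 2 * γ / (1 - γ) * epsApprox Φ v := by
    rw [epsApprox, Real.mul_iInf_of_nonneg hc0]
    exact le_ciInf key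
  rw [hq, show ∑ a, π a * r s₀ a + V - (∑ a, π a * r s₀ a + γ * ∑ s, μ s * v s)
    = V - γ * ∑ s, μ s * v s by ring]
  refine hfin.trans ?_
  have : 10 * γ * epsApprox Φ v / (1 - γ) = 5 * (2 * γ / (1 - γ) * epsApprox Φ v) := by ring
  rw [this]
  have := mul_nonneg hc0 heps
  linarith

end MDPPlan
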